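/- For infinitely many positive integers n, there exists an n-vertex regular simple graph G whose (ordinary) adjacency matrix has minimum eigenvalue λ_min and maximum eigenvalue λ_max satisfying λ_min < λ_max and |λ_min/(λ_max − λ_min)| · n ≤ 4 n^{3/4} (in particular α(G) ≤ 4 n^{3/4}), while n_{≥0}(A) ≥ n/4 for every Hermitian weighted adjacency matrix A of G. -/

import Mathlib

/-!
Let `G` be triangle-free with at most one common neighbour for each pair of distinct vertices, and
let `A` be a Hermitian matrix supported on `G` all of whose rows have norm one. Then `tr A = 0`,
`tr A² = n`, `tr A³ = 0` and `tr A⁴ ≤ 2n`, so summing a suitable quartic polynomial, bounded by `8`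
on `[0, ∞)` and by `0` on `(-∞, 0)`, over the eigenvalues of `A` gives `n ≤ 4 n_{≥0}(A)`.

If `G` is moreover regular, every Hermitian matrix whose nonzero entries are exactly those on the
edges of `G` is congruent, by a positive diagonal matrix `D`, to one with unit rows. The scaling
equations for `D` are the critical point equations of a coercive function, and congruence preserves
the number of non-negative eigenvalues. Arbitrary matrices supported on `G` are limits of such
matrices, and the number of non-negative eigenvalues is upper semicontinuous.

For a finite field of `q` elements, `q ≡ 1` mod `4`, Parsons' induced subgraph of the polarity graph
of the affine plane satisfies all these conditions. It has about `q² / 2` vertices and degree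
`(q + 1) / 2`, while its eigenvalues other than the degree inherit the bound `√q` from the polarity
graph. So the ratio bound is of order `n / √q`, that is, `n^{3/4}`.
-/

open Matrix Finset

attribute [local instance] Classical.propDecidable

section Hermitian

open Module Topology

variable {V 𝕜 : Type*} [Fintype V] [RCLike 𝕜] {A : Matrix V V 𝕜}

lemma star_dotProduct_self_eq_sum_norm_sq (x : V → 𝕜) :
    star x ⬝ᵥ x = ((∑ i, ‖x i‖ ^ 2 : ℝ) : 𝕜) := by
  simp [dotProduct, RCLike.conj_mul]

lemma trace_mul_self_eq_sum_norm_sq (hA : A.IsHermitian) :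
    (A * A).trace = ((∑ i, ∑ j, ‖A i j‖ ^ 2 : ℝ) : 𝕜) := by
  simp only [trace, diag_apply, mul_apply, RCLike.ofReal_sum]
  refine sum_congr rfl fun i _ ↦ sum_congr rfl fun j _ ↦ ?_
  rw [← hA.apply j i, RCLike.star_def, RCLike.mul_conj, RCLike.ofReal_pow]

variable [DecidableEq V]

lemma re_dotProduct_mulVec_eq_sum_eigenvalues (hA : A.IsHermitian) (x : V → 𝕜) :
    RCLike.re (star x ⬝ᵥ A *ᵥ x) =
      ∑ i, hA.eigenvalues i * ‖(star (hA.eigenvectorUnitary : Matrix V V 𝕜) *ᵥ x) i‖ ^ 2 := by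
  set U : Matrix V V 𝕜 := (hA.eigenvectorUnitary : Matrix V V 𝕜)
  have hAU : A = U * diagonal (RCLike.ofReal ∘ hA.eigenvalues) * star U := by
    conv_lhs => rw [hA.spectral_theorem, Unitary.conjStarAlgAut_apply]
  have hxU : star x ᵥ* U = star (star U *ᵥ x) := by
    rw [star_mulVec, star_eq_conjTranspose, conjTranspose_conjTranspose]
  conv_lhs => rw [hAU]
  rw [← mulVec_mulVec, ← mulVec_mulVec, dotProduct_mulVec, hxU, dotProduct, map_sum]
  refine sum_congr rfl fun i _ ↦ ?_
  rw [mulVec_diagonal, Pi.star_apply, Function.comp_apply, mul_left_comm, RCLike.re_ofReal_mul,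
    RCLike.star_def, RCLike.conj_mul, ← RCLike.ofReal_pow, RCLike.ofReal_re]

lemma sum_norm_sq_star_mulVec_of_mem_unitary {U : Matrix V V 𝕜} (hU : U ∈ unitaryGroup V 𝕜)
    (x : V → 𝕜) : ∑ i, ‖(star U *ᵥ x) i‖ ^ 2 = ∑ i, ‖x i‖ ^ 2 := by
  apply RCLike.ofReal_injective (K := 𝕜)
  rw [← star_dotProduct_self_eq_sum_norm_sq, ← star_dotProduct_self_eq_sum_norm_sq, star_mulVec,
    dotProduct_mulVec, vecMul_vecMul, star_eq_conjTranspose, conjTranspose_conjTranspose,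
    ← star_eq_conjTranspose, mem_unitaryGroup_iff.mp hU, vecMul_one]

lemma mul_sum_norm_sq_le_re_dotProduct_mulVec (hA : A.IsHermitian) {l : ℝ}
    (hl : ∀ i, l ≤ hA.eigenvalues i) (x : V → 𝕜) :
    l * ∑ i, ‖x i‖ ^ 2 ≤ RCLike.re (star x ⬝ᵥ A *ᵥ x) := by
  rw [re_dotProduct_mulVec_eq_sum_eigenvalues hA,
    ← sum_norm_sq_star_mulVec_of_mem_unitary hA.eigenvectorUnitary.2, mul_sum]
  gcongr with i
  exact hl i

lemma trace_pow_eq_sum_eigenvalues_pow (hA : A.IsHermitian) (k : ℕ) :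
    (A ^ k).trace = ((∑ i, hA.eigenvalues i ^ k : ℝ) : 𝕜) := by
  conv_lhs => rw [hA.spectral_theorem]
  rw [← map_pow, Unitary.conjStarAlgAut_apply, trace_mul_cycle]
  simp [diagonal_pow, trace]

/-- The span of the eigenvectors of `A` with index satisfying `p`, encoded as the space of vectors
whose coordinates in the eigenbasis vanish outside `p`. -/
noncomputable def eigenvectorSpan (hA : A.IsHermitian) (p : V → Prop) : Submodule 𝕜 (V → 𝕜) :=
  LinearMap.ker (LinearMap.funLeft 𝕜 𝕜 (Subtype.val : {i // ¬ p i} → V) ∘ₗ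
    (star (hA.eigenvectorUnitary : Matrix V V 𝕜)).mulVecLin)

lemma star_eigenvectorUnitary_mulVec_apply_eq_zero {hA : A.IsHermitian} {p : V → Prop} {x : V → 𝕜}
    (hx : x ∈ eigenvectorSpan hA p) {i : V} (hi : ¬ p i) :
    (star (hA.eigenvectorUnitary : Matrix V V 𝕜) *ᵥ x) i = 0 :=
  congrFun (LinearMap.mem_ker.mp hx) ⟨i, hi⟩

lemma card_le_finrank_eigenvectorSpan (hA : A.IsHermitian) (p : V → Prop) [DecidablePred p] :
    Fintype.card {i // p i} ≤ finrank 𝕜 (eigenvectorSpan hA p) := by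
  set f := LinearMap.funLeft 𝕜 𝕜 (Subtype.val : {i // ¬ p i} → V) ∘ₗ
    (star (hA.eigenvectorUnitary : Matrix V V 𝕜)).mulVecLin
  have hrange : finrank 𝕜 (LinearMap.range f) ≤ Fintype.card {i // ¬ p i} := by
    simpa using (LinearMap.range f).finrank_le
  have hrank := f.finrank_range_add_finrank_ker
  rw [finrank_fintype_fun_eq_card, ← Fintype.card_congr (Equiv.sumCompl p), Fintype.card_sum]
    at hrank
  change _ ≤ finrank 𝕜 (LinearMap.ker f)
  omega

/-- The number `n_{≥0}(A)` of non-negative eigenvalues of `A`, counted with multiplicity. -/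
noncomputable def nonnegIndex (hA : A.IsHermitian) : ℕ :=
  Fintype.card {i // 0 ≤ hA.eigenvalues i}

lemma exists_submodule_forall_re_dotProduct_mulVec_neg (hA : A.IsHermitian) :
    ∃ W : Submodule 𝕜 (V → 𝕜), Fintype.card V ≤ finrank 𝕜 W + nonnegIndex hA ∧
      ∀ x ∈ W, x ≠ 0 → RCLike.re (star x ⬝ᵥ A *ᵥ x) < 0 := by
  refine ⟨eigenvectorSpan hA fun i ↦ ¬ 0 ≤ hA.eigenvalues i, ?_, fun x hx hx0 ↦ ?_⟩
  · rw [nonnegIndex, ← Fintype.card_congr (Equiv.sumCompl fun i ↦ 0 ≤ hA.eigenvalues i),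
      Fintype.card_sum, add_comm]
    gcongr
    exact card_le_finrank_eigenvectorSpan hA _
  · set y := star (hA.eigenvectorUnitary : Matrix V V 𝕜) *ᵥ x with hy
    have hy0 : y ≠ 0 := fun h ↦ hx0 <| by
      have hUy := congrArg (hA.eigenvectorUnitary.1 *ᵥ ·) h
      simpa [hy, mulVec_mulVec] using hUy
    obtain ⟨i, hi⟩ := Function.ne_iff.mp hy0
    have hcoord : ∀ j, 0 ≤ hA.eigenvalues j → y j = 0 := fun j hj ↦
      star_eigenvectorUnitary_mulVec_apply_eq_zero hx (not_not.mpr hj)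
    rw [re_dotProduct_mulVec_eq_sum_eigenvalues hA]
    refine sum_neg' (fun j _ ↦ ?_) ⟨i, mem_univ i, ?_⟩
    · rcases le_or_gt 0 (hA.eigenvalues j) with hj | hj
      · simp [← hy, hcoord j hj]
      · exact mul_nonpos_of_nonpos_of_nonneg hj.le (by positivity)
    · exact mul_neg_of_neg_of_pos (not_le.mp fun h ↦ hi (hcoord i h))
        (pow_pos (norm_pos_iff.mpr hi) 2)

lemma finrank_add_nonnegIndex_le (hA : A.IsHermitian) {W : Submodule 𝕜 (V → 𝕜)}
    (hW : ∀ x ∈ W, x ≠ 0 → RCLike.re (star x ⬝ᵥ A *ᵥ x) < 0) :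
    finrank 𝕜 W + nonnegIndex hA ≤ Fintype.card V := by
  have hdisj : Disjoint W (eigenvectorSpan hA fun i ↦ 0 ≤ hA.eigenvalues i) := by
    rw [Submodule.disjoint_def]
    intro x hxW hxP
    by_contra hx0
    refine (hW x hxW hx0).not_ge ?_
    rw [re_dotProduct_mulVec_eq_sum_eigenvalues hA]
    refine sum_nonneg fun i _ ↦ ?_
    by_cases hi : 0 ≤ hA.eigenvalues i
    · positivity
    · simp [star_eigenvectorUnitary_mulVec_apply_eq_zero hxP hi]
  calc finrank 𝕜 W + nonnegIndex hA
      ≤ finrank 𝕜 W + finrank 𝕜 (eigenvectorSpan hA fun i ↦ 0 ≤ hA.eigenvalues i) := by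
        gcongr; exact card_le_finrank_eigenvectorSpan hA _
    _ ≤ finrank 𝕜 (V → 𝕜) := Submodule.finrank_add_finrank_le_of_disjoint hdisj
    _ = Fintype.card V := finrank_fintype_fun_eq_card 𝕜

lemma nonnegIndex_conjTranspose_mul_mul_le (hA : A.IsHermitian) {D : Matrix V V 𝕜}
    (hD : IsUnit D) : nonnegIndex (isHermitian_conjTranspose_mul_mul D hA) ≤ nonnegIndex hA := by
  obtain ⟨W, hWcard, hWneg⟩ := exists_submodule_forall_re_dotProduct_mulVec_neg hA
  let e : (V → 𝕜) ≃ₗ[𝕜] (V → 𝕜) := LinearEquiv.ofBijective D.mulVecLin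
    ⟨mulVec_injective_iff_isUnit.mpr hD, mulVec_surjective_iff_isUnit.mpr hD⟩
  have hmap := finrank_add_nonnegIndex_le (isHermitian_conjTranspose_mul_mul D hA)
    (W := W.map e.symm.toLinearMap) fun x hx hx0 ↦ by
      have hneg := hWneg (D *ᵥ x) ((Submodule.mem_map_equiv W).mp hx) (e.map_ne_zero_iff.mpr hx0)
      rwa [star_mulVec, ← dotProduct_mulVec, mulVec_mulVec, mulVec_mulVec] at hneg
  rw [LinearEquiv.finrank_map_eq] at hmap
  omega

lemma eventually_nonnegIndex_le (hA : A.IsHermitian) :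
    ∀ᶠ B in 𝓝 A, ∀ hB : B.IsHermitian, nonnegIndex hB ≤ nonnegIndex hA := by
  obtain ⟨W, hWcard, hWneg⟩ := exists_submodule_forall_re_dotProduct_mulVec_neg hA
  have hcompact : IsCompact ((W : Set (V → 𝕜)) ∩ Metric.sphere 0 1) :=
    (isCompact_sphere 0 1).inter_left W.closed_of_finiteDimensional
  have hsphere : ∀ᶠ B in 𝓝 A, ∀ x ∈ (W : Set (V → 𝕜)) ∩ Metric.sphere 0 1,
      RCLike.re (star x ⬝ᵥ B *ᵥ x) < 0 := by
    refine hcompact.eventually_forall_of_forall_eventually fun x hx ↦ ?_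
    have hcont : Continuous fun z : Matrix V V 𝕜 × (V → 𝕜) ↦
        RCLike.re (star z.2 ⬝ᵥ z.1 *ᵥ z.2) :=
      RCLike.continuous_re.comp
        (continuous_snd.star.dotProduct (continuous_fst.matrix_mulVec continuous_snd))
    exact hcont.continuousAt.eventually_lt_const
      (hWneg x hx.1 (ne_zero_of_mem_unit_sphere ⟨x, hx.2⟩))
  filter_upwards [hsphere] with B hB hBherm
  have hBW := finrank_add_nonnegIndex_le hBherm (W := W) fun x hx hx0 ↦ by
    have hnorm : (0 : ℝ) < ‖x‖ := norm_pos_iff.mpr hx0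
    have hunit := hB (((‖x‖⁻¹ : ℝ) : 𝕜) • x)
      ⟨W.smul_mem _ hx, by simp [norm_smul, hnorm.ne']⟩
    simp only [star_smul, mulVec_smul, smul_dotProduct, dotProduct_smul, smul_eq_mul,
      RCLike.star_def, RCLike.conj_ofReal, RCLike.re_ofReal_mul] at hunit
    exact neg_of_mul_neg_right (neg_of_mul_neg_right hunit (by positivity)) (by positivity)
  omega

end Hermitian

section Scaling

open Filter Real

lemma tendsto_sum_apply_cocompact_atTop {ι : Type*} [Fintype ι] {f : ι → ℝ → ℝ}
    (hf : ∀ i, Continuous (f i)) (hlim : ∀ i, Tendsto (f i) (cocompact ℝ) atTop) :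
    Tendsto (fun u : ι → ℝ ↦ ∑ i, f i (u i)) (cocompact (ι → ℝ)) atTop := by
  choose a ha using fun i ↦ (hf i).exists_forall_le (hlim i)
  rw [← coprodᵢ_cocompact, Filter.coprodᵢ, tendsto_iSup]
  intro i
  have hi : Tendsto (fun u : ι → ℝ ↦ f i (u i) + ∑ j ∈ univ.erase i, f j (a j))
      (comap (Function.eval i) (cocompact ℝ)) atTop :=
    tendsto_atTop_add_const_right _ _ ((hlim i).comp tendsto_comap)
  refine tendsto_atTop_mono (fun u ↦ ?_) hi
  rw [← add_sum_erase univ (fun j ↦ f j (u j)) (mem_univ i)]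
  gcongr with j
  exact ha j (u j)

lemma tendsto_mul_exp_sub_mul_cocompact_atTop {b s : ℝ} (hb : 0 < b) (hs : 0 < s) :
    Tendsto (fun u ↦ b * exp u - s * u) (cocompact ℝ) atTop := by
  rw [cocompact_eq_atBot_atTop, tendsto_sup]
  constructor
  · refine tendsto_atTop_mono (f := fun u ↦ s * -u) (fun u ↦ ?_)
      (tendsto_neg_atBot_atTop.const_mul_atTop hs)
    linarith [mul_pos hb (exp_pos u)]
  · have hquot := tendsto_mul_exp_add_div_pow_atTop b 0 1 hb
    refine (tendsto_id.atTop_mul_atTop₀ (tendsto_atTop_add_const_right _ (-s) hquot)).congr' ?_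
    filter_upwards [eventually_ne_atTop 0] with u hu
    simp only [id, pow_one]
    field_simp
    ring

-- The left-hand side is the derivative in direction `z` of the function
-- `x ↦ ∑ e, (b e * exp (T x e) - s e * T x e)`, which is coercive on the range of `T`.
lemma exists_forall_sum_mul_exp_sub_mul_eq_zero {ι M : Type*} [Fintype ι] [AddCommGroup M]
    [Module ℝ M] (T : M →ₗ[ℝ] ι → ℝ) {b s : ι → ℝ} (hb : ∀ e, 0 < b e) (hs : ∀ e, 0 < s e) :
    ∃ x, ∀ z, ∑ e, (b e * exp (T x e) - s e) * T z e = 0 := by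
  set g : (ι → ℝ) → ℝ := fun u ↦ ∑ e, (b e * exp (u e) - s e * u e)
  have hcoercive : Tendsto g (cocompact _) atTop :=
    tendsto_sum_apply_cocompact_atTop (f := fun e u ↦ b e * exp u - s e * u)
      (fun e ↦ by fun_prop) fun e ↦ tendsto_mul_exp_sub_mul_cocompact_atTop (hb e) (hs e)
  obtain ⟨_, ⟨x, rfl⟩, hmin⟩ := ContinuousOn.exists_isMinOn' (s := (LinearMap.range T : Set _))
    (f := g) (by fun_prop) (LinearMap.range T).closed_of_finiteDimensional
    (Submodule.zero_mem _)
    ((hcoercive.eventually_ge_atTop (g 0)).filter_mono inf_le_left)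
  refine ⟨x, fun z ↦ ?_⟩
  have hlocal : IsLocalMin (fun t : ℝ ↦ g (T x + t • T z)) 0 :=
    Eventually.of_forall fun t ↦ by
      simpa using hmin ⟨x + t • z, by simp⟩
  have hderiv : HasDerivAt (fun t : ℝ ↦ g (T x + t • T z))
      (∑ e, (b e * exp (T x e) - s e) * T z e) 0 := by
    refine HasDerivAt.fun_sum fun e _ ↦ ?_
    have hline : HasDerivAt (fun t : ℝ ↦ (T x + t • T z) e) (T z e) 0 := by
      simpa using ((hasDerivAt_id (0 : ℝ)).mul_const (T z e)).const_add (T x e)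
    refine ((hline.exp.const_mul (b e)).fun_sub (hline.const_mul (s e))).congr_deriv ?_
    simp [sub_mul, mul_assoc]
  exact hlocal.hasDerivAt_eq_zero hderiv

lemma exists_pos_forall_sum_mul_mul_eq {V : Type*} [Fintype V] {b s : V → V → ℝ}
    (hb : ∀ i j, b i j = b j i) (hs : ∀ i j, s i j = s j i) (hs0 : ∀ i j, 0 ≤ s i j)
    (hbs : ∀ i j, 0 < s i j → 0 < b i j) (hb0 : ∀ i j, s i j = 0 → b i j = 0) :
    ∃ y : V → ℝ, (∀ i, 0 < y i) ∧ ∀ i, ∑ j, b i j * (y i * y j) = ∑ j, s i j := by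
  let T : (V → ℝ) →ₗ[ℝ] {e : V × V // 0 < s e.1 e.2} → ℝ :=
    LinearMap.funLeft ℝ ℝ (fun e ↦ e.1.1) + LinearMap.funLeft ℝ ℝ fun e ↦ e.1.2
  obtain ⟨x, hx⟩ := exists_forall_sum_mul_exp_sub_mul_eq_zero T (fun e ↦ hbs _ _ e.2) fun e ↦ e.2
  refine ⟨fun i ↦ exp (x i), fun i ↦ exp_pos _, fun i ↦ ?_⟩
  set c : V → V → ℝ := fun j k ↦ b j k * (exp (x j) * exp (x k)) - s j k with hc
  have hcsymm : ∀ j k, c j k = c k j := fun j k ↦ by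
    simp only [hc, hb j k, hs j k, mul_comm (exp (x j))]
  let δ : V → ℝ := Pi.single i 1
  have hvanish : ∀ e : {e : V × V // ¬ 0 < s e.1 e.2},
      c e.1.1 e.1.2 * (δ e.1.1 + δ e.1.2) = 0 := by
    rintro ⟨e, he⟩
    have hse := (hs0 e.1 e.2).antisymm' (not_lt.mp he)
    simp [hc, hse, hb0 _ _ hse]
  have hsum : ∑ j, ∑ k, c j k * (δ j + δ k) = 0 := by
    rw [← Fintype.sum_prod_type', ← Fintype.sum_subtype_add_sum_subtype
      (fun e : V × V ↦ 0 < s e.1 e.2), Fintype.sum_eq_zero _ hvanish, add_zero]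
    simpa [T, c, exp_add, LinearMap.funLeft_apply] using hx δ
  have hrow : 2 * ∑ j, c i j = 0 := by
    rw [← hsum]
    simp only [mul_add, sum_add_distrib]
    rw [sum_comm]
    simp [δ, Pi.single_apply, hcsymm _ i, two_mul]
  simpa [hc, sub_eq_zero] using hrow

end Scaling

section GirthFive

open RCLike

-- The left-hand side is `x * (x + √2) ^ 2 * (3 / 2 * √2 - x)`, whose only sign change in
-- `(-∞, 3 / 2 * √2)` is at `0` and whose maximum `8` is attained at `√2`.
lemma moment_polynomial_le (x : ℝ) :
    3 * √2 * x + 4 * x ^ 2 - √2 / 2 * x ^ 3 - x ^ 4 ≤ if 0 ≤ x then 8 else 0 := by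
  have hsq : √2 ^ 2 = 2 := Real.sq_sqrt zero_le_two
  have hpos : 0 < √2 := by positivity
  split_ifs with hx
  · have hgap : 8 - (3 * √2 * x + 4 * x ^ 2 - √2 / 2 * x ^ 3 - x ^ 4) =
        (x - √2) ^ 2 * (x ^ 2 + 5 / 2 * √2 * x + 4) := by
      linear_combination (-4 + 4 * x ^ 2 - x * √2 * 5 / 2) * hsq
    have hgap_nonneg : 0 ≤ (x - √2) ^ 2 * (x ^ 2 + 5 / 2 * √2 * x + 4) := by positivity
    linarith
  · have hfactor : 3 * √2 * x + 4 * x ^ 2 - √2 / 2 * x ^ 3 - x ^ 4 =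
        x * (x + √2) ^ 2 * (3 / 2 * √2 - x) := by
      linear_combination (x * (-3 / 2 * √2) - 2 * x ^ 2) * hsq
    rw [hfactor]
    exact mul_nonpos_of_nonpos_of_nonneg
      (mul_nonpos_of_nonpos_of_nonneg (le_of_not_ge hx) (by positivity)) (by linarith)

lemma card_le_four_mul_card_nonneg_of_moments {ι : Type*} [Fintype ι] {l : ι → ℝ}
    (h₁ : ∑ i, l i = 0) (h₂ : ∑ i, l i ^ 2 = Fintype.card ι) (h₃ : ∑ i, l i ^ 3 = 0)
    (h₄ : ∑ i, l i ^ 4 ≤ 2 * Fintype.card ι) :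
    Fintype.card ι ≤ 4 * Fintype.card {i // 0 ≤ l i} := by
  have hsum := sum_le_sum fun i (_ : i ∈ univ) ↦ moment_polynomial_le (l i)
  rw [← sum_filter, sum_const, nsmul_eq_mul, ← Fintype.card_subtype] at hsum
  simp only [sum_add_distrib, sum_sub_distrib, ← mul_sum, h₁, h₂, h₃] at hsum
  have hcard : (Fintype.card ι : ℝ) ≤ 4 * Fintype.card {i // 0 ≤ l i} := by linarith
  exact_mod_cast hcard

lemma norm_sum_sq_eq_sum_norm_sq_of_subsingleton_support {ι E : Type*} [Fintype ι]
    [NormedAddCommGroup E] {f : ι → E} (hf : f.support.Subsingleton) :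
    ‖∑ i, f i‖ ^ 2 = ∑ i, ‖f i‖ ^ 2 := by
  rcases hf.eq_empty_or_singleton with h | ⟨k, h⟩
  · simp [Function.support_eq_empty_iff.mp h]
  · have hzero : ∀ i ≠ k, f i = 0 := fun i hi ↦ by
      rwa [← Function.notMem_support, h, Set.mem_singleton_iff]
    rw [Fintype.sum_eq_single k hzero, Fintype.sum_eq_single k fun i hi ↦ by simp [hzero i hi]]

variable {V 𝕜 : Type*} [Fintype V] [RCLike 𝕜] {G : SimpleGraph V} {A : Matrix V V 𝕜}

lemma trace_eq_zero_of_forall_not_adj (hAG : ∀ i j, ¬ G.Adj i j → A i j = 0) : A.trace = 0 :=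
  sum_eq_zero fun i _ ↦ hAG i i G.irrefl

lemma trace_mul_mul_eq_zero_of_cliqueFree_three (hG : G.CliqueFree 3)
    (hAG : ∀ i j, ¬ G.Adj i j → A i j = 0) : (A * A * A).trace = 0 := by
  simp only [trace, diag_apply, mul_apply, sum_mul]
  refine sum_eq_zero fun i _ ↦ sum_eq_zero fun k _ ↦ sum_eq_zero fun j _ ↦ ?_
  by_contra h
  simp only [mul_eq_zero, not_or] at h
  have hij := not_imp_comm.mp (hAG i j) h.1.1
  have hjk := not_imp_comm.mp (hAG j k) h.1.2
  have hki := not_imp_comm.mp (hAG k i) h.2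
  exact hG {i, j, k} (SimpleGraph.is3Clique_triple_iff.mpr ⟨hij, hki.symm, hjk⟩)

lemma norm_mul_self_apply_sq_eq_of_subsingleton_commonNeighbors {i j : V}
    (hG : (G.commonNeighbors i j).Subsingleton) (hAG : ∀ i j, ¬ G.Adj i j → A i j = 0) :
    ‖(A * A) i j‖ ^ 2 = ∑ k, ‖A i k‖ ^ 2 * ‖A k j‖ ^ 2 := by
  have hsupport : (fun k ↦ A i k * A k j).support ⊆ G.commonNeighbors i j := fun k hk ↦
    ⟨not_imp_comm.mp (hAG i k) (left_ne_zero_of_mul hk),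
      (not_imp_comm.mp (hAG k j) (right_ne_zero_of_mul hk)).symm⟩
  rw [mul_apply, norm_sum_sq_eq_sum_norm_sq_of_subsingleton_support (hG.anti hsupport)]
  simp only [norm_mul, mul_pow]

lemma sum_norm_mul_self_sq_le (hA : A.IsHermitian)
    (hG : ∀ i j, i ≠ j → (G.commonNeighbors i j).Subsingleton)
    (hAG : ∀ i j, ¬ G.Adj i j → A i j = 0) (hrow : ∀ i, ∑ j, ‖A i j‖ ^ 2 = 1) :
    ∑ i, ∑ j, ‖(A * A) i j‖ ^ 2 ≤ 2 * Fintype.card V := by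
  have hentry : ∀ i j,
      ‖(A * A) i j‖ ^ 2 ≤ (if i = j then 1 else 0) + ∑ k, ‖A i k‖ ^ 2 * ‖A k j‖ ^ 2 := by
    intro i j
    split_ifs with hij
    · have hdiag : (A * A) i j = ((∑ k, ‖A i k‖ ^ 2 : ℝ) : 𝕜) := by
        rw [mul_apply, ofReal_sum]
        refine sum_congr rfl fun k _ ↦ ?_
        rw [← hij, ← hA.apply k i, star_def, mul_conj, ofReal_pow]
      rw [hdiag, hrow, ofReal_one, norm_one, one_pow]
      exact le_add_of_nonneg_right (by positivity)
    · rw [norm_mul_self_apply_sq_eq_of_subsingleton_commonNeighbors (hG i j hij) hAG, zero_add]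
  calc ∑ i, ∑ j, ‖(A * A) i j‖ ^ 2
      ≤ ∑ i, ∑ j, ((if i = j then 1 else 0) + ∑ k, ‖A i k‖ ^ 2 * ‖A k j‖ ^ 2) := by
        gcongr with i _ j; exact hentry i j
    _ = ∑ i : V, (1 + 1 : ℝ) := by
        refine sum_congr rfl fun i _ ↦ ?_
        rw [sum_add_distrib, sum_ite_eq, if_pos (mem_univ i), sum_comm]
        simp only [← mul_sum, hrow, mul_one]
    _ = 2 * Fintype.card V := by rw [sum_const, nsmul_eq_mul, card_univ]; ring

lemma card_le_four_mul_nonnegIndex_of_sum_norm_sq_eq_one [DecidableEq V] (hA : A.IsHermitian)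
    (hG₃ : G.CliqueFree 3) (hG₄ : ∀ i j, i ≠ j → (G.commonNeighbors i j).Subsingleton)
    (hAG : ∀ i j, ¬ G.Adj i j → A i j = 0) (hrow : ∀ i, ∑ j, ‖A i j‖ ^ 2 = 1) :
    Fintype.card V ≤ 4 * nonnegIndex hA := by
  have hmoment : ∀ k (t : ℝ), (A ^ k).trace = (t : 𝕜) → ∑ i, hA.eigenvalues i ^ k = t :=
    fun k t ht ↦ ofReal_injective (K := 𝕜) ((trace_pow_eq_sum_eigenvalues_pow hA k).symm.trans ht)
  have hAA : (A * A).IsHermitian := by simpa [hA.eq] using isHermitian_mul_conjTranspose_self A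
  apply card_le_four_mul_card_nonneg_of_moments
  · simpa using hmoment 1 0 (by simp [trace_eq_zero_of_forall_not_adj hAG])
  · refine hmoment 2 _ ?_
    rw [pow_two, trace_mul_self_eq_sum_norm_sq hA]
    simp [hrow]
  · exact hmoment 3 0 (by
      rw [pow_three', trace_mul_mul_eq_zero_of_cliqueFree_three hG₃ hAG, ofReal_zero])
  · rw [hmoment 4 (∑ i, ∑ j, ‖(A * A) i j‖ ^ 2)]
    · exact sum_norm_mul_self_sq_le hA hG₄ hAG hrow
    · rw [← trace_mul_self_eq_sum_norm_sq hAA, ← pow_two, ← pow_two, ← pow_mul]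

end GirthFive

section Inertia

open Topology RCLike

variable {V 𝕜 : Type*} [RCLike 𝕜] {G : SimpleGraph V} {A : Matrix V V 𝕜}

lemma frequently_isHermitian_and_forall_eq_zero_iff (hA : A.IsHermitian)
    (hAG : ∀ i j, ¬ G.Adj i j → A i j = 0) :
    ∃ᶠ B in 𝓝 A, B.IsHermitian ∧ ∀ i j, B i j = 0 ↔ ¬ G.Adj i j := by
  let C : Matrix V V 𝕜 := of fun i j ↦ if G.Adj i j ∧ A i j = 0 then 1 else 0
  have hC : C.IsHermitian := IsHermitian.ext fun i j ↦ by
    have hsymm : G.Adj j i ∧ A j i = 0 ↔ G.Adj i j ∧ A i j = 0 := by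
      rw [G.adj_comm j i, ← hA.apply i j, star_eq_zero]
    simp only [C, of_apply, hsymm]
    split_ifs <;> simp
  have hlim : Filter.Tendsto (fun ε : ℝ ↦ A + (ε : 𝕜) • C) (𝓝[≠] 0) (𝓝 A) := by
    have hcont : Continuous fun ε : ℝ ↦ A + (ε : 𝕜) • C := by fun_prop
    simpa using (hcont.tendsto 0).mono_left nhdsWithin_le_nhds
  refine hlim.frequently (Filter.Eventually.frequently ?_)
  filter_upwards [self_mem_nhdsWithin] with ε hε
  refine ⟨hA.add (hC.smul (conj_ofReal ε)), fun i j ↦ ?_⟩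
  by_cases hij : G.Adj i j
  · by_cases hAij : A i j = 0 <;> simp_all [C]
  · simp [C, hij, hAG i j hij]

variable [Fintype V] [DecidableRel G.Adj] {d : ℕ}

lemma exists_pos_forall_sum_norm_sqrt_mul_mul_sqrt_sq_eq_one (hA : A.IsHermitian)
    (hG : G.IsRegularOfDegree d) (hd : d ≠ 0) (hAG : ∀ i j, A i j = 0 ↔ ¬ G.Adj i j) :
    ∃ y : V → ℝ, (∀ i, 0 < y i) ∧ ∀ i, ∑ j, ‖(√(y i) : 𝕜) * A i j * (√(y j) : 𝕜)‖ ^ 2 = 1 := by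
  obtain ⟨y, hy, hsum⟩ := exists_pos_forall_sum_mul_mul_eq
    (b := fun i j ↦ ‖A i j‖ ^ 2) (s := fun i j ↦ (d : ℝ)⁻¹ * G.adjMatrix ℝ i j)
    (fun i j ↦ by rw [← hA.apply i j, norm_star])
    (fun i j ↦ by simp only [SimpleGraph.adjMatrix_apply, G.adj_comm])
    (fun i j ↦ by rw [SimpleGraph.adjMatrix_apply]; positivity)
    (fun i j hs ↦ by
      have hij : G.Adj i j := by by_contra h; simp [h] at hs
      exact pow_pos (norm_pos_iff.mpr fun h ↦ (hAG i j).mp h hij) 2)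
    (fun i j hs ↦ by
      have hij : ¬ G.Adj i j := by simpa [hd] using hs
      simp [(hAG i j).mpr hij])
  refine ⟨y, hy, fun i ↦ ?_⟩
  have hrow : ∑ j, (d : ℝ)⁻¹ * G.adjMatrix ℝ i j = 1 := by
    have hdeg := SimpleGraph.adjMatrix_mulVec_const_apply_of_regular (α := ℝ) (a := 1) hG (v := i)
    simp only [mulVec, dotProduct, Function.const_apply, mul_one] at hdeg
    rw [← mul_sum, hdeg, inv_mul_cancel₀ (Nat.cast_ne_zero.mpr hd)]
  rw [← hrow, ← hsum i]
  refine sum_congr rfl fun j _ ↦ ?_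
  rw [norm_mul, norm_mul, norm_ofReal, norm_ofReal, mul_pow, mul_pow, sq_abs, sq_abs,
    Real.sq_sqrt (hy i).le, Real.sq_sqrt (hy j).le]
  ring

variable [DecidableEq V]

lemma card_le_four_mul_nonnegIndex_of_forall_eq_zero_iff (hA : A.IsHermitian)
    (hG : G.IsRegularOfDegree d) (hd : d ≠ 0) (hG₃ : G.CliqueFree 3)
    (hG₄ : ∀ i j, i ≠ j → (G.commonNeighbors i j).Subsingleton)
    (hAG : ∀ i j, A i j = 0 ↔ ¬ G.Adj i j) : Fintype.card V ≤ 4 * nonnegIndex hA := by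
  obtain ⟨y, hy, hrow⟩ := exists_pos_forall_sum_norm_sqrt_mul_mul_sqrt_sq_eq_one hA hG hd hAG
  set D : Matrix V V 𝕜 := diagonal fun i ↦ (√(y i) : 𝕜) with hD
  have hDunit : IsUnit D := by
    refine isUnit_diagonal.mpr (Pi.isUnit_iff.mpr fun i ↦ ?_)
    exact isUnit_iff_ne_zero.mpr (ofReal_ne_zero.mpr (Real.sqrt_pos.mpr (hy i)).ne')
  have hentry : ∀ i j, (Dᴴ * A * D) i j = (√(y i) : 𝕜) * A i j * (√(y j) : 𝕜) := by
    simp [hD, diagonal_conjTranspose]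
  calc Fintype.card V
      ≤ 4 * nonnegIndex (isHermitian_conjTranspose_mul_mul D hA) :=
        card_le_four_mul_nonnegIndex_of_sum_norm_sq_eq_one _ hG₃ hG₄
          (fun i j hij ↦ by rw [hentry, (hAG i j).mpr hij, mul_zero, zero_mul])
          fun i ↦ by simpa only [hentry] using hrow i
    _ ≤ 4 * nonnegIndex hA := by
        gcongr; exact nonnegIndex_conjTranspose_mul_mul_le hA hDunit

theorem card_le_four_mul_nonnegIndex (hA : A.IsHermitian) (hG : G.IsRegularOfDegree d)
    (hd : d ≠ 0) (hG₃ : G.CliqueFree 3)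
    (hG₄ : ∀ i j, i ≠ j → (G.commonNeighbors i j).Subsingleton)
    (hAG : ∀ i j, ¬ G.Adj i j → A i j = 0) : Fintype.card V ≤ 4 * nonnegIndex hA := by
  obtain ⟨B, ⟨hB, hBG⟩, hle⟩ := ((frequently_isHermitian_and_forall_eq_zero_iff hA
    hAG).and_eventually (eventually_nonnegIndex_le hA)).exists
  calc Fintype.card V
      ≤ 4 * nonnegIndex hB :=
        card_le_four_mul_nonnegIndex_of_forall_eq_zero_iff hB hG hd hG₃ hG₄ hBG
    _ ≤ 4 * nonnegIndex hA := by gcongr; exact hle hB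

end Inertia

section SpectralExpansion

variable {V W : Type*} [Fintype V] [Fintype W] {M : Matrix V V ℝ} {μ : ℝ}

/-- The quadratic form of `M` is bounded by `μ` on vectors with zero sum. For the adjacency matrix
of a `d`-regular graph on `n` vertices this says that the graph is an `(n, d, μ)`-graph. -/
def HasSpectralExpansion (M : Matrix V V ℝ) (μ : ℝ) : Prop :=
  ∀ w : V → ℝ, ∑ i, w i = 0 → |w ⬝ᵥ M *ᵥ w| ≤ μ * (w ⬝ᵥ w)

lemma HasSpectralExpansion.submatrix (hM : HasSpectralExpansion M μ) (f : W ↪ V) :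
    HasSpectralExpansion (M.submatrix f f) μ := by
  intro w hw
  set w' : V → ℝ := Function.extend f w 0
  have hw' : ∀ i, w' (f i) = w i := fun i ↦ f.injective.extend_apply w 0 i
  have hsum : ∀ g : V → ℝ, ∑ i, w i * g (f i) = ∑ j, w' j * g j := fun g ↦
    Fintype.sum_of_injective f f.injective _ _
      (fun j hj ↦ by simp [w', Function.extend_apply' _ _ _ hj]) fun i ↦ by rw [hw']
  have hmulVec : ∀ i, (M.submatrix f f *ᵥ w) i = (M *ᵥ w') (f i) := fun i ↦ by
    simpa only [mulVec, dotProduct, submatrix_apply, mul_comm] using hsum (M (f i))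
  have hquad : w ⬝ᵥ M.submatrix f f *ᵥ w = w' ⬝ᵥ M *ᵥ w' := by
    simp only [dotProduct, hmulVec, hsum]
  have hself : w ⬝ᵥ w = w' ⬝ᵥ w' := by
    simpa only [dotProduct, hw'] using hsum w'
  rw [hquad, hself]
  exact hM w' (by simpa [hw] using (hsum 1).symm)

lemma hasSpectralExpansion_of_dotProduct_mulVec_self_le (hμ : 0 ≤ μ)
    (hM : ∀ w : V → ℝ, ∑ i, w i = 0 → M *ᵥ w ⬝ᵥ M *ᵥ w ≤ μ ^ 2 * (w ⬝ᵥ w)) :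
    HasSpectralExpansion M μ := by
  intro w hw
  have hww : 0 ≤ w ⬝ᵥ w := sum_nonneg fun i _ ↦ mul_self_nonneg (w i)
  refine abs_le_of_sq_le_sq ?_ (by positivity)
  calc (w ⬝ᵥ M *ᵥ w) ^ 2 ≤ (w ⬝ᵥ w) * (M *ᵥ w ⬝ᵥ M *ᵥ w) := by
        simpa [dotProduct, pow_two] using sum_mul_sq_le_sq_mul_sq univ w (M *ᵥ w)
    _ ≤ (w ⬝ᵥ w) * (μ ^ 2 * (w ⬝ᵥ w)) := by gcongr; exact hM w hw
    _ = (μ * (w ⬝ᵥ w)) ^ 2 := by ring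

end SpectralExpansion

section RegularGraph

variable {V : Type*} [Fintype V] {G : SimpleGraph V} [DecidableRel G.Adj] {d : ℕ} {μ : ℝ}

lemma adjMatrix_mulVec_one (hG : G.IsRegularOfDegree d) :
    G.adjMatrix ℝ *ᵥ 1 = (d : ℝ) • (1 : V → ℝ) := by
  ext i
  simp [hG.degree_eq i]

lemma dotProduct_adjMatrix_mulVec_comm (x y : V → ℝ) :
    x ⬝ᵥ G.adjMatrix ℝ *ᵥ y = y ⬝ᵥ G.adjMatrix ℝ *ᵥ x := by
  rw [dotProduct_mulVec, ← mulVec_transpose, G.transpose_adjMatrix, dotProduct_comm]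

lemma sum_eq_zero_of_adjMatrix_mulVec_eq_smul (hG : G.IsRegularOfDegree d) {v : V → ℝ} {l : ℝ}
    (hv : G.adjMatrix ℝ *ᵥ v = l • v) (hl : l ≠ d) : ∑ i, v i = 0 := by
  have hsum : l * (1 ⬝ᵥ v) = d * (1 ⬝ᵥ v) := by
    rw [← smul_eq_mul, ← dotProduct_smul, ← hv, dotProduct_adjMatrix_mulVec_comm,
      adjMatrix_mulVec_one hG, dotProduct_smul, smul_eq_mul, dotProduct_comm]
  rw [← one_dotProduct]
  exact (mul_eq_mul_right_iff.mp hsum).resolve_left hl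

lemma dotProduct_adjMatrix_mulVec_le (hG : G.IsRegularOfDegree d) (x : V → ℝ) :
    x ⬝ᵥ G.adjMatrix ℝ *ᵥ x ≤ d * (x ⬝ᵥ x) := by
  have hlap := (SimpleGraph.posSemidef_lapMatrix ℝ G).dotProduct_mulVec_nonneg x
  have hdeg : G.degMatrix ℝ *ᵥ x = (d : ℝ) • x := by
    ext i
    simp [SimpleGraph.degMatrix, mulVec_diagonal, hG.degree_eq i]
  rw [star_trivial, SimpleGraph.lapMatrix, sub_mulVec, dotProduct_sub, hdeg, dotProduct_smul,
    smul_eq_mul] at hlap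
  linarith

lemma indicator_dotProduct_adjMatrix_mulVec_indicator {s : Set V} (hs : G.IsIndepSet s) :
    s.indicator (1 : V → ℝ) ⬝ᵥ G.adjMatrix ℝ *ᵥ s.indicator 1 = 0 := by
  rw [G.dotProduct_mulVec_adjMatrix]
  refine sum_eq_zero fun i _ ↦ sum_eq_zero fun j _ ↦ ite_eq_right_iff.mpr fun hij ↦ ?_
  by_cases hi : i ∈ s
  · have hj : j ∉ s := fun hj ↦ hs hi hj hij.ne hij
    simp [hj]
  · simp [hi]

variable [DecidableEq V] (hA : (G.adjMatrix ℝ).IsHermitian)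

lemma eigenvectorBasis_dotProduct_adjMatrix_mulVec (i : V) :
    (hA.eigenvectorBasis i).ofLp ⬝ᵥ G.adjMatrix ℝ *ᵥ (hA.eigenvectorBasis i).ofLp =
      hA.eigenvalues i := by
  simpa using (hA.eigenvalues_eq i).symm

lemma eigenvectorBasis_dotProduct_self (i : V) :
    (hA.eigenvectorBasis i).ofLp ⬝ᵥ (hA.eigenvectorBasis i).ofLp = 1 := by
  have hnorm := real_inner_self_eq_norm_sq (hA.eigenvectorBasis i)
  rwa [EuclideanSpace.inner_eq_star_dotProduct, star_trivial, hA.eigenvectorBasis.norm_eq_one,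
    one_pow] at hnorm

lemma eigenvalues_adjMatrix_le (hG : G.IsRegularOfDegree d) (i : V) : hA.eigenvalues i ≤ d := by
  have h := dotProduct_adjMatrix_mulVec_le hG (hA.eigenvectorBasis i).ofLp
  rwa [eigenvectorBasis_dotProduct_adjMatrix_mulVec, eigenvectorBasis_dotProduct_self, mul_one]
    at h

lemma exists_eigenvalues_adjMatrix_eq [Nonempty V] (hG : G.IsRegularOfDegree d) :
    ∃ i, hA.eigenvalues i = d := by
  have hd : Module.End.HasEigenvector (toLin' (G.adjMatrix ℝ)) d 1 :=
    ⟨Module.End.mem_eigenspace_iff.mpr (adjMatrix_mulVec_one hG), one_ne_zero⟩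
  have hspec := (Module.End.hasEigenvalue_of_hasEigenvector hd).mem_spectrum
  rwa [spectrum_toLin', hA.spectrum_real_eq_range_eigenvalues] at hspec

lemma exists_eigenvalues_adjMatrix_neg [Nonempty V] (hG : G.IsRegularOfDegree d) (hd : d ≠ 0) :
    ∃ i, hA.eigenvalues i < 0 := by
  obtain ⟨k, hk⟩ := exists_eigenvalues_adjMatrix_eq hA hG
  have htrace := hA.trace_eq_sum_eigenvalues
  rw [SimpleGraph.trace_adjMatrix] at htrace
  by_contra! hnonneg
  have hpos : 0 < ∑ i, hA.eigenvalues i :=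
    sum_pos' (fun i _ ↦ hnonneg i) ⟨k, mem_univ k, by rw [hk]; positivity⟩
  exact hpos.ne (by simpa using htrace)

lemma abs_eigenvalues_adjMatrix_le (hG : G.IsRegularOfDegree d)
    (hμ : HasSpectralExpansion (G.adjMatrix ℝ) μ) {i : V} (hi : hA.eigenvalues i ≠ d) :
    |hA.eigenvalues i| ≤ μ := by
  have h := hμ _ (sum_eq_zero_of_adjMatrix_mulVec_eq_smul hG (hA.mulVec_eigenvectorBasis i) hi)
  rwa [eigenvectorBasis_dotProduct_adjMatrix_mulVec, eigenvectorBasis_dotProduct_self, mul_one]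
    at h

lemma abs_eigenvalues_div_sub_le (hG : G.IsRegularOfDegree d) (hd : d ≠ 0)
    (hμ : HasSpectralExpansion (G.adjMatrix ℝ) μ) {i : V} (hi : hA.eigenvalues i < 0) :
    |hA.eigenvalues i / (d - hA.eigenvalues i)| ≤ μ / d := by
  have hd' : (0 : ℝ) < d := by positivity
  have habs := abs_eigenvalues_adjMatrix_le hA hG hμ (hi.trans hd').ne
  rw [abs_div, abs_of_pos (by linarith : 0 < d - hA.eigenvalues i)]
  gcongr
  · exact (abs_nonneg _).trans habs
  · linarith

lemma card_le_abs_div_sub_mul_card (hG : G.IsRegularOfDegree d) {l : ℝ}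
    (hl : ∀ i, l ≤ hA.eigenvalues i) (hl₀ : l < 0) {s : Finset V} (hs : G.IsIndepSet s) :
    (#s : ℝ) ≤ |l / (d - l)| * Fintype.card V := by
  have hdl : 0 < d - l := by have := d.cast_nonneg (α := ℝ); linarith
  rw [abs_div, abs_of_neg hl₀, abs_of_pos hdl, div_mul_eq_mul_div, le_div_iff₀ hdl]
  rcases s.eq_empty_or_nonempty with rfl | hne
  · simpa using mul_nonpos_of_nonpos_of_nonneg hl₀.le (Fintype.card V).cast_nonneg
  set χ : V → ℝ := Set.indicator s 1 with hχ
  set c := (#s : ℝ) with hc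
  set n := (Fintype.card V : ℝ) with hn
  have hcn : 0 < n * c := by
    have hs₀ := hne.card_pos
    have hV₀ := hs₀.trans_le s.card_le_univ
    positivity
  have hχχ : χ ⬝ᵥ χ = c := by simp [hχ, hc, dotProduct, Set.indicator_apply]
  have hχ1 : χ ⬝ᵥ 1 = c := by simp [hχ, hc, dotProduct, Set.indicator_apply]
  have hχAχ : χ ⬝ᵥ G.adjMatrix ℝ *ᵥ χ = 0 :=
    indicator_dotProduct_adjMatrix_mulVec_indicator hs
  have h11 : (1 : V → ℝ) ⬝ᵥ 1 = n := by simp [hn, dotProduct]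
  set w : V → ℝ := n • χ - c • 1 with hw
  have hww : w ⬝ᵥ w = n * c * (n - c) := by
    simp only [hw, sub_dotProduct, dotProduct_sub, smul_dotProduct, dotProduct_smul, smul_eq_mul,
      dotProduct_comm 1 χ, hχχ, hχ1, h11]
    ring
  have hwAw : w ⬝ᵥ G.adjMatrix ℝ *ᵥ w = -(n * c * (d * c)) := by
    simp only [hw, mulVec_sub, mulVec_smul, sub_dotProduct, dotProduct_sub, smul_dotProduct,
      dotProduct_smul, smul_eq_mul, dotProduct_adjMatrix_mulVec_comm 1 χ,
      adjMatrix_mulVec_one hG, hχAχ, hχ1, h11]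
    ring
  have hrayleigh : l * (w ⬝ᵥ w) ≤ w ⬝ᵥ G.adjMatrix ℝ *ᵥ w := by
    simpa [dotProduct, pow_two] using mul_sum_norm_sq_le_re_dotProduct_mulVec hA hl w
  rw [hww, hwAw] at hrayleigh
  have hcancel : n * c * (l * (n - c)) ≤ n * c * -(d * c) := by linarith
  linarith [le_of_mul_le_mul_left hcancel hcn]

end RegularGraph

lemma card_filter_mul_eq_one {K : Type*} [GroupWithZero K] [Fintype K] [DecidableEq K] {c : K}
    (hc : c ≠ 0) (e : K) : #{b | c * b = e} = 1 := by
  rw [card_eq_one]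
  exact ⟨c⁻¹ * e, by ext b; simp [eq_inv_mul_iff_mul_eq₀ hc]⟩

section Polarity

variable {K : Type*} [Field K] [DecidableEq K]

/-- The adjacency matrix, loops included, of the graph on `K × K` in which `(a, e)` and `(b, f)`
are joined when `e + f = (a - b) ^ 2`. The substitution `e ↦ e + a ^ 2` turns this condition into
`e + f = -2 * a * b`, the polarity graph of an affine plane without its vertical lines. -/
def polarityMatrix (K : Type*) [Field K] [DecidableEq K] : Matrix (K × K) (K × K) ℝ :=
  of fun x y ↦ if x.2 + y.2 = (x.1 - y.1) ^ 2 then 1 else 0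

/-- The incidence matrix of the vertical lines `{a} × K` and the points of `K × K`. -/
def verticalMatrix (K : Type*) [DecidableEq K] : Matrix K (K × K) ℝ :=
  of fun a x ↦ if x.1 = a then 1 else 0

lemma transpose_polarityMatrix : (polarityMatrix K)ᵀ = polarityMatrix K := by
  ext x y
  simp only [polarityMatrix, transpose_apply, of_apply]
  rw [add_comm, ← neg_sub, neg_sq]

variable [Fintype K]

lemma polarityMatrix_mul_self (hK : ringChar K ≠ 2) :
    polarityMatrix K * polarityMatrix K = (Fintype.card K : ℝ) • 1 + vecMulVec 1 1 -
      (verticalMatrix K)ᵀ * verticalMatrix K := by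
  ext ⟨a, e⟩ ⟨b, f⟩
  have hcount : (polarityMatrix K * polarityMatrix K) (a, e) (b, f) =
      #{c : K | 2 * (a - b) * c = a ^ 2 - b ^ 2 - e + f} := by
    rw [mul_apply, Fintype.sum_prod_type, ← sum_boole]
    refine sum_congr rfl fun c _ ↦ ?_
    rw [sum_eq_single ((a - c) ^ 2 - e)]
    · have hiff : (a - c) ^ 2 - e + f = (c - b) ^ 2 ↔
          2 * (a - b) * c = a ^ 2 - b ^ 2 - e + f := by
        constructor <;> intro h <;> linear_combination -h
      simp [polarityMatrix, hiff]
    · intro g _ hg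
      have hne : e + g ≠ (a - c) ^ 2 := fun h ↦ hg (by linear_combination h)
      simp [polarityMatrix, hne]
    · simp
  have h2 : (2 : K) ≠ 0 := Ring.two_ne_zero hK
  rw [hcount]
  rcases eq_or_ne a b with rfl | hab
  · simp [mul_apply, verticalMatrix, one_apply, eq_comm, neg_add_eq_zero, apply_ite]
  · rw [card_filter_mul_eq_one (mul_ne_zero h2 (sub_ne_zero.mpr hab))]
    simp [mul_apply, verticalMatrix, hab, one_apply]

lemma hasSpectralExpansion_polarityMatrix (hK : ringChar K ≠ 2) :
    HasSpectralExpansion (polarityMatrix K) √(Fintype.card K) := by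
  refine hasSpectralExpansion_of_dotProduct_mulVec_self_le (Real.sqrt_nonneg _) fun w hw ↦ ?_
  have hvert : 0 ≤ verticalMatrix K *ᵥ w ⬝ᵥ verticalMatrix K *ᵥ w :=
    sum_nonneg fun i _ ↦ mul_self_nonneg _
  have h1w : 1 ⬝ᵥ w = 0 := by rw [one_dotProduct, hw]
  calc polarityMatrix K *ᵥ w ⬝ᵥ polarityMatrix K *ᵥ w
      = w ⬝ᵥ (polarityMatrix K * polarityMatrix K) *ᵥ w := by
        rw [← mulVec_mulVec, dotProduct_mulVec w, ← mulVec_transpose, transpose_polarityMatrix]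
    _ = Fintype.card K * (w ⬝ᵥ w) - verticalMatrix K *ᵥ w ⬝ᵥ verticalMatrix K *ᵥ w := by
        rw [polarityMatrix_mul_self hK, sub_mulVec, add_mulVec, dotProduct_sub, dotProduct_add,
          ← mulVec_mulVec, dotProduct_mulVec w (verticalMatrix K)ᵀ, vecMul_transpose, smul_mulVec,
          one_mulVec, dotProduct_smul, smul_eq_mul, vecMulVec_mulVec, h1w]
        simp
    _ ≤ √(Fintype.card K) ^ 2 * (w ⬝ᵥ w) := by
        rw [Real.sq_sqrt (Nat.cast_nonneg _)]
        linarith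

end Polarity

section QuadraticChar

variable {K : Type*} [Field K] [Fintype K] [DecidableEq K]

lemma sum_quadraticChar_sq_sub (hK : ringChar K ≠ 2) {e : K} (he : e ≠ 0) :
    ∑ t, quadraticChar K (t ^ 2 - e) = -1 := by
  have h2 : (2 : K) ≠ 0 := Ring.two_ne_zero hK
  have hsqrts (t : K) : quadraticChar K (t ^ 2 - e) + 1 = #{u : K | 2 * u * t = u ^ 2 + e} := by
    rw [← quadraticChar_card_sqrts hK]
    refine congrArg Nat.cast <| card_bij' (fun s _ ↦ t - s) (fun u _ ↦ t - u) ?_ ?_ ?_ ?_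
    · simp only [Set.mem_toFinset, Set.mem_ofPred_eq, mem_filter_univ]
      intro s hs
      linear_combination -hs
    · simp only [Set.mem_toFinset, Set.mem_ofPred_eq, mem_filter_univ]
      intro u hu
      linear_combination -hu
    · simp
    · simp
  have hcount (u : K) : #{t | 2 * u * t = u ^ 2 + e} = if u = 0 then 0 else 1 := by
    rcases eq_or_ne u 0 with rfl | hu
    · simp [he.symm]
    · rw [card_filter_mul_eq_one (mul_ne_zero h2 hu), if_neg hu]
  have hsum : ∑ t, (quadraticChar K (t ^ 2 - e) + 1) = Fintype.card K - 1 := by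
    simp only [hsqrts, card_filter, Nat.cast_sum]
    rw [sum_comm]
    simp only [← Nat.cast_sum, ← card_filter, hcount]
    simp [sum_ite, filter_ne', Nat.cast_pred Fintype.card_pos]
  rw [sum_add_distrib, sum_const, card_univ, nsmul_one] at hsum
  linarith

lemma two_mul_card_filter_not_isSquare_sq_sub (hK : ringChar K ≠ 2) {e : K} (he : ¬ IsSquare e) :
    2 * #{t | ¬ IsSquare (t ^ 2 - e)} = Fintype.card K + 1 := by
  have hterm (t : K) : 1 - quadraticChar K (t ^ 2 - e) =
      2 * if ¬ IsSquare (t ^ 2 - e) then 1 else 0 := by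
    by_cases ht : IsSquare (t ^ 2 - e)
    · have ht₀ : t ^ 2 - e ≠ 0 := fun h ↦ he ⟨t, by linear_combination -h⟩
      simp [ht, (quadraticChar_one_iff_isSquare ht₀).mpr ht]
    · simp [ht, quadraticChar_neg_one_iff_not_isSquare.mpr ht]
  have hsum : ∑ t, (1 - quadraticChar K (t ^ 2 - e)) = Fintype.card K + 1 := by
    rw [sum_sub_distrib, sum_quadraticChar_sq_sub hK fun h ↦ he ⟨0, by simp [h]⟩]
    simp
  simp only [hterm, ← mul_sum, sum_boole] at hsum
  exact_mod_cast hsum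

end QuadraticChar

section ParsonsGraph

variable {K : Type*} [Field K]

/-- The subgraph of the polarity graph with adjacency matrix `polarityMatrix K` induced by the
points with non-square second coordinate. Requiring `x ≠ y` only matters in characteristic two:
otherwise the points carrying a loop are those with second coordinate `0`. -/
def parsonsGraph (K : Type*) [Field K] : SimpleGraph {x : K × K // ¬ IsSquare x.2} where
  Adj x y := x ≠ y ∧ x.1.2 + y.1.2 = (x.1.1 - y.1.1) ^ 2
  symm := ⟨fun x y ⟨hxy, h⟩ ↦ ⟨hxy.symm, by rw [add_comm, h, ← neg_sub, neg_sq]⟩⟩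
  loopless := ⟨fun _ h ↦ h.1 rfl⟩

lemma parsonsGraph_adj (hK : ringChar K ≠ 2) {x y : {x : K × K // ¬ IsSquare x.2}} :
    (parsonsGraph K).Adj x y ↔ x.1.2 + y.1.2 = (x.1.1 - y.1.1) ^ 2 := by
  refine and_iff_right_of_imp ?_
  rintro h rfl
  rw [sub_self, zero_pow two_ne_zero, ← two_mul] at h
  exact x.2 ((mul_eq_zero.mp h).resolve_left (Ring.two_ne_zero hK) ▸ IsSquare.zero)

lemma subsingleton_commonNeighbors_parsonsGraph (hK : ringChar K ≠ 2)
    {x y : {x : K × K // ¬ IsSquare x.2}} (hxy : x ≠ y) :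
    ((parsonsGraph K).commonNeighbors x y).Subsingleton := by
  rintro ⟨⟨b, f⟩, hf⟩ ⟨hxz, hyz⟩ ⟨⟨c, g⟩, hg⟩ ⟨hxw, hyw⟩
  obtain ⟨⟨a, e⟩, he⟩ := x
  obtain ⟨⟨a', e'⟩, he'⟩ := y
  simp only [SimpleGraph.mem_neighborSet, parsonsGraph_adj hK] at hxz hyz hxw hyw
  have hprod : 2 * ((a - a') * (b - c)) = 0 := by linear_combination hxz - hyz - hxw + hyw
  rcases mul_eq_zero.mp ((mul_eq_zero.mp hprod).resolve_left (Ring.two_ne_zero hK)) with h | h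
  · obtain rfl := sub_eq_zero.mp h
    exact absurd (by simp; linear_combination hxz - hyz) hxy
  · obtain rfl := sub_eq_zero.mp h
    simp only [Subtype.mk.injEq, Prod.mk.injEq, true_and]
    linear_combination hxz - hxw

lemma cliqueFree_three_parsonsGraph [Finite K] (hK : ringChar K ≠ 2) (hneg : IsSquare (-1 : K)) :
    (parsonsGraph K).CliqueFree 3 := by
  intro s hs
  obtain ⟨⟨⟨a, e⟩, he⟩, ⟨⟨b, f⟩, hf⟩, ⟨⟨c, g⟩, hg⟩, hab, hac, hbc, -⟩ :=
    SimpleGraph.is3Clique_iff.mp hs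
  have h2 : (2 : K) ≠ 0 := Ring.two_ne_zero hK
  simp only [parsonsGraph_adj hK] at hab hac hbc
  have hee : e = (a - b) * (a - c) := mul_left_cancel₀ h2 (by linear_combination hab + hac - hbc)
  have hff : f = -1 * ((a - b) * (b - c)) :=
    mul_left_cancel₀ h2 (by linear_combination hab + hbc - hac)
  have hgg : g = (a - c) * (b - c) := mul_left_cancel₀ h2 (by linear_combination hac + hbc - hab)
  have hsq : IsSquare (e * f * g) := by
    have : e * f * g = -1 * ((a - b) * (a - c) * (b - c)) ^ 2 := by rw [hee, hff, hgg]; ring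
    rw [this]
    exact hneg.mul (IsSquare.sq _)
  have := Fintype.ofFinite K
  rw [← quadraticChar_neg_one_iff_not_isSquare] at he hf hg
  refine quadraticChar_neg_one_iff_not_isSquare.mp ?_ hsq
  rw [map_mul, map_mul, he, hf, hg]
  norm_num

lemma adjMatrix_parsonsGraph [DecidableEq K] [DecidableRel (parsonsGraph K).Adj]
    (hK : ringChar K ≠ 2) :
    (parsonsGraph K).adjMatrix ℝ = (polarityMatrix K).submatrix Subtype.val Subtype.val := by
  ext x y
  simp [SimpleGraph.adjMatrix_apply, parsonsGraph_adj hK, polarityMatrix]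

variable [Fintype K]

lemma card_le_card_parsonsGraph_vertices (hK : ringChar K ≠ 2) :
    Fintype.card K ≤ Fintype.card {x : K × K // ¬ IsSquare x.2} := by
  obtain ⟨e, he⟩ := FiniteField.exists_nonsquare hK
  exact Fintype.card_le_of_injective (fun a ↦ ⟨(a, e), he⟩) fun a b h ↦ by simpa using h

lemma card_parsonsGraph_vertices_le (K : Type*) [Field K] [Fintype K] :
    Fintype.card {x : K × K // ¬ IsSquare x.2} ≤ Fintype.card K ^ 2 := by
  rw [pow_two, ← Fintype.card_prod]
  exact Fintype.card_subtype_le _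

variable [DecidableRel (parsonsGraph K).Adj]

lemma two_mul_degree_parsonsGraph (hK : ringChar K ≠ 2) (x : {x : K × K // ¬ IsSquare x.2}) :
    2 * (parsonsGraph K).degree x = Fintype.card K + 1 := by
  rw [← two_mul_card_filter_not_isSquare_sq_sub hK x.2, ← SimpleGraph.card_neighborFinset_eq_degree]
  refine congrArg (2 * ·) (card_bij (fun y _ ↦ x.1.1 - y.1.1) ?_ ?_ ?_)
  · intro y hy
    rw [SimpleGraph.mem_neighborFinset, parsonsGraph_adj hK] at hy
    rw [mem_filter_univ, ← hy, add_sub_cancel_left]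
    exact y.2
  · intro y hy z hz hyz
    rw [SimpleGraph.mem_neighborFinset, parsonsGraph_adj hK] at hy hz
    have h₁ : y.1.1 = z.1.1 := sub_right_injective hyz
    have h₂ : y.1.2 = z.1.2 := by rw [← h₁] at hz; exact add_left_cancel (hy.trans hz.symm)
    exact Subtype.ext (Prod.ext h₁ h₂)
  · intro t ht
    rw [mem_filter_univ] at ht
    refine ⟨⟨(x.1.1 - t, t ^ 2 - x.1.2), ht⟩, ?_, sub_sub_cancel _ _⟩
    rw [SimpleGraph.mem_neighborFinset, parsonsGraph_adj hK]
    ring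

lemma hasSpectralExpansion_adjMatrix_parsonsGraph (hK : ringChar K ≠ 2) :
    HasSpectralExpansion ((parsonsGraph K).adjMatrix ℝ) √(Fintype.card K) := by
  rw [adjMatrix_parsonsGraph hK]
  exact (hasSpectralExpansion_polarityMatrix hK).submatrix (Function.Embedding.subtype _)

end ParsonsGraph

section Transport

variable {V W : Type*} {G : SimpleGraph V} {H : SimpleGraph W}

lemma subsingleton_commonNeighbors_of_embedding (f : H ↪g G)
    (hG : ∀ i j, i ≠ j → (G.commonNeighbors i j).Subsingleton) (i j : W) (hij : i ≠ j) :
    (H.commonNeighbors i j).Subsingleton := fun _ ⟨hik, hjk⟩ _ ⟨hil, hjl⟩ ↦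
  f.injective <| hG (f i) (f j) (f.injective.ne hij) ⟨f.map_adj_iff.mpr hik, f.map_adj_iff.mpr hjk⟩
    ⟨f.map_adj_iff.mpr hil, f.map_adj_iff.mpr hjl⟩

variable [Fintype V] [Fintype W] [DecidableRel G.Adj] [DecidableRel H.Adj]

lemma isRegularOfDegree_of_iso (e : G ≃g H) {d : ℕ} (hG : G.IsRegularOfDegree d) :
    H.IsRegularOfDegree d := by
  intro w
  rw [← hG.degree_eq (e.symm w), e.symm.degree_eq]

lemma hasSpectralExpansion_adjMatrix_of_embedding (f : H ↪g G) {μ : ℝ}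
    (hG : HasSpectralExpansion (G.adjMatrix ℝ) μ) : HasSpectralExpansion (H.adjMatrix ℝ) μ := by
  rw [← f.submatrix_adjMatrix ℝ]
  exact hG.submatrix f.toEmbedding

end Transport

lemma exists_girth_five_hasSpectralExpansion {K : Type*} [Field K] [Fintype K]
    (hK : ringChar K ≠ 2) (hneg : IsSquare (-1 : K)) :
    ∃ (n : ℕ) (G : SimpleGraph (Fin n)) (d : ℕ), Fintype.card K ≤ n ∧ n ≤ Fintype.card K ^ 2 ∧
      2 * d = Fintype.card K + 1 ∧ G.IsRegularOfDegree d ∧ G.CliqueFree 3 ∧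
      (∀ i j, i ≠ j → (G.commonNeighbors i j).Subsingleton) ∧
      HasSpectralExpansion (G.adjMatrix ℝ) √(Fintype.card K) := by
  set e := (parsonsGraph K).overFinIso rfl
  obtain ⟨b, hb⟩ := FiniteField.exists_nonsquare hK
  have hreg : (parsonsGraph K).IsRegularOfDegree ((parsonsGraph K).degree ⟨(0, b), hb⟩) :=
    fun x ↦ mul_left_cancel₀ two_ne_zero <|
      (two_mul_degree_parsonsGraph hK x).trans (two_mul_degree_parsonsGraph hK _).symm
  exact ⟨_, (parsonsGraph K).overFin rfl, _, card_le_card_parsonsGraph_vertices hK,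
    card_parsonsGraph_vertices_le K, two_mul_degree_parsonsGraph hK _,
    isRegularOfDegree_of_iso e hreg, (cliqueFree_three_parsonsGraph hK hneg).comap e.isContained',
    subsingleton_commonNeighbors_of_embedding e.symm.toEmbedding fun _ _ ↦
      subsingleton_commonNeighbors_parsonsGraph hK,
    hasSpectralExpansion_adjMatrix_of_embedding e.symm.toEmbedding
      (hasSpectralExpansion_adjMatrix_parsonsGraph hK)⟩

lemma le_mul_rpow_of_le_pow_four {a x : ℝ} (ha : 0 ≤ a) (hx : 0 ≤ x) (h : a ≤ x ^ 4) :
    a ≤ x * a ^ (3 / 4 : ℝ) :=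
  calc a = a ^ (1 / 4 : ℝ) * a ^ (3 / 4 : ℝ) := by
        rw [← Real.rpow_add_of_nonneg ha (by norm_num) (by norm_num)]
        norm_num
    _ ≤ (x ^ 4) ^ (1 / 4 : ℝ) * a ^ (3 / 4 : ℝ) := by gcongr
    _ = x * a ^ (3 / 4 : ℝ) := by
        rw [← Real.rpow_natCast, ← Real.rpow_mul hx]
        norm_num

lemma sqrt_div_mul_le_mul_rpow {q n d : ℕ} (hn : n ≤ q ^ 2) (hd : 2 * d = q + 1) :
    √q / d * n ≤ 4 * (n : ℝ) ^ (3 / 4 : ℝ) := by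
  have hd₀ : d ≠ 0 := by omega
  have hqd : (q : ℝ) ≤ 4 * d := by exact_mod_cast (by omega : q ≤ 4 * d)
  have hn' : (n : ℝ) ≤ √q ^ 4 := by
    rw [pow_mul (√(q : ℝ)) 2 2, Real.sq_sqrt q.cast_nonneg]
    exact_mod_cast hn
  calc √q / d * n ≤ √q / d * (√q * (n : ℝ) ^ (3 / 4 : ℝ)) := by
        gcongr
        exact le_mul_rpow_of_le_pow_four n.cast_nonneg (Real.sqrt_nonneg _) hn'
    _ = q / d * (n : ℝ) ^ (3 / 4 : ℝ) := by
        rw [← mul_assoc, div_mul_eq_mul_div, Real.mul_self_sqrt q.cast_nonneg]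
    _ ≤ 4 * (n : ℝ) ^ (3 / 4 : ℝ) := by
        gcongr
        exact (div_le_iff₀ (by positivity)).mpr hqd

/-- For infinitely many `n` there is an `n`-vertex regular graph `G` whose adjacency matrix
has minimum and maximum eigenvalues `lmin < lmax` with `|lmin/(lmax - lmin)| * n ≤ 4 n^{3/4}`
(in particular `α(G) ≤ 4 n^{3/4}`), while every Hermitian weighted adjacency matrix of `G` has
at least `n/4` non-negative eigenvalues. -/
theorem inertia_bound_far_from_ratio_bound :
    {n : ℕ | 0 < n ∧
      ∃ G : SimpleGraph (Fin n),
        (∃ d : ℕ, G.IsRegularOfDegree d) ∧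
        (∃ (hA : (G.adjMatrix ℝ).IsHermitian) (lmin lmax : ℝ),
          (∀ i, lmin ≤ hA.eigenvalues i) ∧ (∃ i, hA.eigenvalues i = lmin) ∧
          (∀ i, hA.eigenvalues i ≤ lmax) ∧ (∃ i, hA.eigenvalues i = lmax) ∧
          lmin < lmax ∧
          |lmin / (lmax - lmin)| * n ≤ 4 * (n : ℝ) ^ ((3 : ℝ) / 4)) ∧
        (∀ s : Finset (Fin n), (∀ i ∈ s, ∀ j ∈ s, ¬ G.Adj i j) →
          (s.card : ℝ) ≤ 4 * (n : ℝ) ^ ((3 : ℝ) / 4)) ∧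
        (∀ (A : Matrix (Fin n) (Fin n) ℂ) (hA : A.IsHermitian),
          (∀ i j, ¬ G.Adj i j → A i j = 0) →
          (n : ℝ) / 4 ≤ (Fintype.card {i : Fin n // 0 ≤ hA.eigenvalues i} : ℝ))}.Infinite := by
  rw [Set.infinite_iff_exists_gt]
  intro N
  obtain ⟨p, hp, hNp, hp4⟩ := Nat.exists_prime_gt_modEq_one (k := 4) N (by norm_num)
  rw [Nat.ModEq] at hp4
  have : Fact p.Prime := ⟨hp⟩
  have hK : ringChar (ZMod p) ≠ 2 := by rw [ZMod.ringChar_zmod_n]; omega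
  have hneg : IsSquare (-1 : ZMod p) := by rw [ZMod.exists_sq_eq_neg_one_iff]; omega
  obtain ⟨n, G, d, hpn, hnp, hd, hG, hG₃, hG₄, hμ⟩ := exists_girth_five_hasSpectralExpansion hK hneg
  rw [ZMod.card] at hpn hnp hd hμ
  have : NeZero n := ⟨by omega⟩
  have hd₀ : d ≠ 0 := by omega
  have hA : (G.adjMatrix ℝ).IsHermitian := G.isHermitian_adjMatrix ℝ
  obtain ⟨m, hmin⟩ := Finite.exists_min hA.eigenvalues
  obtain ⟨k, hk⟩ := exists_eigenvalues_adjMatrix_neg hA hG hd₀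
  have hm : hA.eigenvalues m < 0 := (hmin k).trans_lt hk
  have hratio : |hA.eigenvalues m / (d - hA.eigenvalues m)| * n ≤ 4 * (n : ℝ) ^ (3 / 4 : ℝ) :=
    (mul_le_mul_of_nonneg_right (abs_eigenvalues_div_sub_le hA hG hd₀ hμ hm) n.cast_nonneg).trans
      (sqrt_div_mul_le_mul_rpow hnp hd)
  refine ⟨n, ⟨by omega, G, ⟨d, hG⟩, ⟨hA, _, d, hmin, ⟨m, rfl⟩, eigenvalues_adjMatrix_le hA hG,
    exists_eigenvalues_adjMatrix_eq hA hG, by linarith [d.cast_nonneg (α := ℝ)], hratio⟩,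
    fun s hs ↦ ?_, fun A hA' hAG ↦ ?_⟩, by omega⟩
  · have hcard := card_le_abs_div_sub_mul_card hA hG hmin hm fun i hi j hj _ ↦ hs i hi j hj
    exact (by simpa using hcard : (#s : ℝ) ≤ _).trans hratio
  · have hcard := card_le_four_mul_nonnegIndex hA' hG hd₀ hG₃ hG₄ hAG
    rw [Fintype.card_fin, nonnegIndex] at hcard
    exact (div_le_iff₀' four_pos).mpr (by exact_mod_cast hcard)
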